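/- arXiv:1409.1093 — 4 statements merged into one kernel-verified Lean document; each statement's English description precedes it below -/
import Mathlib

section
/- Main Theorem: Let (J,Q,1) be a weak quadratic Jordan division algebra over a field k. Then the linearized identities (QJ2*) and (QJ3*) hold for all a₁, a₂, b ∈ J; that is, every weak quadratic Jordan division algebra is a quadratic Jordan algebra. -/
/-!
The linearized identities follow, over every field, from one bilinear consequence of (QJ1)–(QJ3)
and division; no separation of homogeneous components by scalars is needed, so small fields need
no separate treatment.

Write `z⁻¹` for the inverse of `z ≠ 0`, with maps acting on the right. Two factorizations
`V_{z,b} = Q_{z⁻¹,b} Q_z = Q_b Q_{b⁻¹,z}` hold (`Q_Qbil_inv`, `Qbil_inv_Q`). Expanding the instance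
`Q_{z·Q_{z⁻¹+b}} = Q_{z⁻¹+b} Q_z Q_{z⁻¹+b}` of (QJ3) gives
`Q_{z⁻¹,b} Q_z Q_{z⁻¹,b} = Q_{z⁻¹,z·Q_b} + 2 Q_b` (`Qbil_inv_sq`). Multiplied by `Q_z`, this
computes `V_{z,b}²` as `V_{z,z·Q_b} + 2 Q_b Q_z`; with `z` and `b` exchanged, and multiplied by
`Q_b`, it computes `V_{z,b}²` as `V_{b·Q_z,b} + 2 Q_b Q_z`. Hence
`V_{z,z·Q_b} = V_{b·Q_z,b}` (`V_Q_shift`).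

Both sides are quadratic in `b`, so this may be polarized in `b`. Substituting `a = c·Q_z`, the
polarized form becomes `Q_{z,z·V_{a,b}} = V_{b,a} Q_z + Q_z V_{a,b}` (`Qbil_V`): every `V_{a,b}`
acts as a derivation of the Jordan structure. Identity (QJ3*) is this statement for the element
`b·Q_{a₁}` and the map `V_{a₂,a₁⁻¹}`; (QJ2*) is a linear combination of `V_Q_shift` polarized,
`Qbil_V`, and `Qbil_V` polarized in `z`.
-/

/-- A weak quadratic Jordan algebra `(J, Q, 1)` over a field `k`.
Endomorphisms act on the right: `x·Q_a` is `Q a x`; a paper product `A B`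
(apply `A`, then `B`) corresponds to the Mathlib product `B * A`. -/
structure WeakQuadraticJordan (k J : Type*) [Field k] [AddCommGroup J]
    [Module k J] where
  Q : J → Module.End k J
  one : J
  one_ne_zero : one ≠ 0
  Q_smul : ∀ (t : k) (a : J), Q (t • a) = (t ^ 2) • Q a
  Qbil : J →ₗ[k] J →ₗ[k] Module.End k J
  Qbil_apply : ∀ a b : J, Qbil a b = Q (a + b) - Q a - Q b
  QJ1 : Q one = 1
  QJ2 : ∀ a b x : J, Qbil a (Q a x) b = Q a (Qbil b x a)
  QJ3 : ∀ a b : J, Q (Q a b) = Q a * Q b * Q a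

namespace WeakQuadraticJordan

variable {k J : Type*} [Field k] [AddCommGroup J] [Module k J]

/-- `V W a b` is the endomorphism `V_{a,b} : x ↦ b·Q_{a,x}`. -/
def V (W : WeakQuadraticJordan k J) (a b : J) : Module.End k J where
  toFun x := W.Qbil a x b
  map_add' x y := by simp
  map_smul' t x := by simp

/-- `δ` is an `ε`-derivation: `δ(a·Q_b) = ε·δ(a)·Q_b + a·Q_{b,δ(b)}`. -/
def IsEpsDerivation (W : WeakQuadraticJordan k J) (ε : k) (δ : Module.End k J) : Prop :=
  ∀ a b : J, δ (W.Q b a) = ε • W.Q b (δ a) + W.Qbil b (δ b) a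

/-- Every nonzero element is invertible (`Q_a` is a unit of `End k J`). -/
def IsDivision (W : WeakQuadraticJordan k J) : Prop :=
  ∀ a : J, a ≠ 0 → IsUnit (W.Q a)

end WeakQuadraticJordan

namespace WeakQuadraticJordan

variable {k J : Type*} [Field k] [AddCommGroup J] [Module k J] (W : WeakQuadraticJordan k J)

theorem Qbil_comm (a b : J) : W.Qbil a b = W.Qbil b a := by
  rw [W.Qbil_apply, W.Qbil_apply, add_comm a b]; abel

theorem Q_add (a b : J) : W.Q (a + b) = W.Q a + W.Q b + W.Qbil a b := by
  rw [W.Qbil_apply]; abel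

theorem Q_zero : W.Q 0 = 0 := by
  simpa using W.Q_smul 0 0

theorem Qbil_self (a : J) : W.Qbil a a = W.Q a + W.Q a := by
  rw [W.Qbil_apply, ← two_smul k a, W.Q_smul, show ((2 : k) ^ 2) = 1 + 1 + 1 + 1 by norm_num]
  simp only [add_smul, one_smul]; abel

/-- (QJ2) together with the symmetry of its right-hand side in `b` and `x`. -/
theorem Qbil_Q_symm (a b x : J) : W.Qbil a (W.Q a b) x = W.Qbil a (W.Q a x) b := by
  rw [W.QJ2, W.QJ2, W.Qbil_comm]

/-- (QJ3) polarized in `b`, in which it is quadratic. -/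
theorem Qbil_Q_Q (a b c x : J) :
    W.Qbil (W.Q a b) (W.Q a c) x = W.Q a (W.Qbil b c (W.Q a x)) := by
  have h := W.QJ3 a (b + c)
  rw [map_add, Q_add, Q_add, W.QJ3, W.QJ3] at h
  have h' := LinearMap.congr_fun h x
  simp only [LinearMap.add_apply, Module.End.mul_apply, map_add] at h'
  simpa using h'

/-- `p` is the inverse of `z`, and `Q_p` is the inverse of `Q_z`. -/
structure IsInv (z p : J) : Prop where
  Q_apply : W.Q z p = z
  Q_apply' : W.Q p z = p
  Q_Q : ∀ x, W.Q z (W.Q p x) = x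
  Q_Q' : ∀ x, W.Q p (W.Q z x) = x

variable {W}

theorem IsInv.symm {z p : J} (h : W.IsInv z p) : W.IsInv p z :=
  ⟨h.Q_apply', h.Q_apply, h.Q_Q', h.Q_Q⟩

theorem IsDivision.exists_isInv (hdiv : W.IsDivision) {z : J} (hz : z ≠ 0) :
    ∃ p, W.IsInv z p := by
  have hb : Function.Bijective (W.Q z) := (Module.End.isUnit_iff _).1 (hdiv z hz)
  obtain ⟨p, hp⟩ := hb.2 z
  -- (QJ3) with `b = p` reads `Q_z = Q_z Q_p Q_z`, and `Q_z` is bijective.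
  have h1 : ∀ x, W.Q z (W.Q p (W.Q z x)) = W.Q z x := fun x => by
    have := LinearMap.congr_fun (W.QJ3 z p) x
    rw [hp] at this
    exact this.symm
  have h2 : ∀ x, W.Q p (W.Q z x) = x := fun x => hb.1 (h1 x)
  refine ⟨p, hp, ?_, fun x => ?_, h2⟩
  · conv_lhs => rw [← hp]
    exact h2 p
  · obtain ⟨y, rfl⟩ := hb.2 x
    rw [h2]

/-- `Q_{z⁻¹,b} Q_z = V_{z,b}`. -/
theorem IsInv.Q_Qbil_inv {z p : J} (h : W.IsInv z p) (b x : J) :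
    W.Q z (W.Qbil p b x) = W.Qbil z x b := by
  have e := W.Qbil_Q_Q z p b (W.Q p x)
  rw [h.Q_apply, h.Q_Q, Qbil_Q_symm, h.Q_Q] at e
  exact e.symm

/-- `Q_z Q_{z⁻¹,w} = V_{w,z}`. -/
theorem IsInv.Qbil_inv_Q {z p : J} (h : W.IsInv z p) (w x : J) :
    W.Qbil p w (W.Q z x) = W.Qbil w x z := by
  have e := W.Qbil_Q_Q z p w x
  rw [h.Q_apply, W.QJ2] at e
  have e' := congrArg (W.Q p) e
  rw [h.Q_Q', h.Q_Q'] at e'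
  rw [← e', W.Qbil_comm]

/-- `Q_{z⁻¹,b} Q_z Q_{z⁻¹,b} = Q_{z⁻¹,z·Q_b} + 2 Q_b`: the expansion of (QJ3) for `Q_{z⁻¹+b}`
and `z`, using `z·Q_{z⁻¹+b} = z⁻¹ + 2b + z·Q_b`. -/
theorem IsInv.Qbil_inv_sq {z p : J} (h : W.IsInv z p) (b x : J) :
    W.Qbil p b (W.Q z (W.Qbil p b x)) = W.Qbil p (W.Q b z) x + (W.Q b x + W.Q b x) := by
  have e0 : W.Q (p + b) z = p + (b + b) + W.Q b z := by
    have e1 : W.Qbil p b z = b + b := by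
      have := congrArg (W.Q p) (h.Q_Qbil_inv b z)
      rwa [h.Q_Q', Qbil_self, LinearMap.add_apply, map_add, h.Q_Q'] at this
    rw [Q_add]; simp only [LinearMap.add_apply, h.Q_apply', e1]; abel
  have e := LinearMap.congr_fun (W.QJ3 (p + b) z) x
  -- Both mixed terms of degree three in `b` equal `Q_{b,z·Q_b}`.
  have m1 : W.Q b (W.Q z (W.Qbil p b x)) = W.Qbil b (W.Q b z) x := by
    rw [h.Q_Qbil_inv, W.QJ2, W.Qbil_comm]
  have m2 : W.Qbil p b (W.Q z (W.Q b x)) = W.Qbil b (W.Q b z) x := by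
    rw [h.Qbil_inv_Q, Qbil_Q_symm]
  have m3 : W.Q b (W.Q z (W.Q b x)) = W.Q (W.Q b z) x := by rw [W.QJ3]; rfl
  rw [e0] at e
  simp only [Q_add, Qbil_self, LinearMap.add_apply, Module.End.mul_apply, map_add, m1, m2, m3,
    h.Q_Q, h.Q_Q'] at e
  rw [← sub_eq_zero] at e ⊢
  rw [← neg_eq_zero, ← e]; abel

/-- `V_{z,z·Q_b} = V_{b·Q_z,b}`: both sides are `V_{z,b}² - 2 Q_b Q_z`. -/
theorem IsDivision.V_Q_shift (hdiv : W.IsDivision) (z b x : J) :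
    W.Qbil z x (W.Q b z) = W.Qbil (W.Q z b) x b := by
  rcases eq_or_ne z 0 with rfl | hz
  · simp [Q_zero]
  rcases eq_or_ne b 0 with rfl | hb
  · simp [Q_zero]
  obtain ⟨p, hp⟩ := hdiv.exists_isInv hz
  obtain ⟨q, hq⟩ := hdiv.exists_isInv hb
  have e1 := congrArg (W.Q z) (hp.Qbil_inv_sq b x)
  have e2 := hq.Qbil_inv_sq z (W.Q b x)
  rw [map_add, map_add] at e1
  simp only [hp.Q_Qbil_inv] at e1
  simp only [hq.Qbil_inv_Q] at e2
  exact add_right_cancel (e1.symm.trans e2)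

theorem IsDivision.V_Q_shift_polar (hdiv : W.IsDivision) (z b c x : J) :
    W.Qbil z x (W.Qbil b c z) = W.Qbil (W.Q z b) x c + W.Qbil (W.Q z c) x b := by
  have e := hdiv.V_Q_shift z (b + c) x
  simp only [Q_add, LinearMap.add_apply, map_add, hdiv.V_Q_shift z b x, hdiv.V_Q_shift z c x] at e
  rw [← sub_eq_zero] at e ⊢
  rw [← e]; abel

/-- `Q_{z,z·V_{a,b}} = V_{b,a} Q_z + Q_z V_{a,b}`: the pair `(V_{a,b}, V_{b,a})` acts as a
derivation of the Jordan structure. -/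
theorem IsDivision.Qbil_V (hdiv : W.IsDivision) (z a b x : J) :
    W.Qbil z (W.Qbil a z b) x = W.Q z (W.Qbil b x a) + W.Qbil a (W.Q z x) b := by
  rcases eq_or_ne z 0 with rfl | hz
  · simp [Q_zero]
  obtain ⟨p, hp⟩ := hdiv.exists_isInv hz
  obtain ⟨c, rfl⟩ : ∃ c, a = W.Q z c := ⟨W.Q p a, (hp.Q_Q a).symm⟩
  rw [W.Qbil_comm _ z, W.QJ2, Qbil_Q_symm, hdiv.V_Q_shift_polar, Qbil_Q_Q, ← Qbil_Q_Q]

theorem IsDivision.Qbil_V_polar (hdiv : W.IsDivision) (z w a b x : J) :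
    W.Qbil z (W.Qbil a w b) x + W.Qbil w (W.Qbil a z b) x
      = W.Qbil z w (W.Qbil b x a) + W.Qbil a (W.Qbil z w x) b := by
  have e := hdiv.Qbil_V (z + w) a b x
  simp only [Q_add, LinearMap.add_apply, map_add, hdiv.Qbil_V z a b x, hdiv.Qbil_V w a b x] at e
  rw [← sub_eq_zero] at e ⊢
  rw [← e]; abel

end WeakQuadraticJordan

/-- **Main Theorem.** Every weak quadratic Jordan division algebra satisfies the
linearized identities (QJ2*) and (QJ3*), i.e. it is a quadratic Jordan algebra.
(Paper products `A B` = apply `A` then `B` = Mathlib `B * A`.) -/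
theorem main_theorem {k J : Type*} [Field k] [AddCommGroup J] [Module k J]
    (W : WeakQuadraticJordan k J) (hdiv : W.IsDivision) :
    ∀ a₁ a₂ b : J,
      -- (QJ2*):  Q_{a₁} V_{a₂,b} + Q_{a₁,a₂} V_{a₁,b} = V_{b,a₁} Q_{a₁,a₂} + V_{b,a₂} Q_{a₁}
      (W.V a₂ b * W.Q a₁ + W.V a₁ b * W.Qbil a₁ a₂
        = W.Qbil a₁ a₂ * W.V b a₁ + W.Q a₁ * W.V b a₂) ∧
      -- (QJ3*):  Q_{b·Q_{a₁}, b·Q_{a₁,a₂}} = Q_{a₁,a₂} Q_b Q_{a₁} + Q_{a₁} Q_b Q_{a₁,a₂}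
      (W.Qbil (W.Q a₁ b) (W.Qbil a₁ a₂ b)
        = W.Q a₁ * W.Q b * W.Qbil a₁ a₂ + W.Qbil a₁ a₂ * W.Q b * W.Q a₁) := by
  intro a c b
  constructor
  · ext x
    simp only [WeakQuadraticJordan.V, LinearMap.add_apply, Module.End.mul_apply,
      LinearMap.coe_mk, AddHom.coe_mk]
    have e1 := hdiv.Qbil_V_polar a c a b x
    have e2 := hdiv.Qbil_V a c b x
    have e3 := hdiv.V_Q_shift_polar a b x c
    have e4 : W.Qbil c (W.Qbil a a b) x = W.Qbil (W.Q a b) c x + W.Qbil (W.Q a b) c x := by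
      rw [W.Qbil_self, LinearMap.add_apply, map_add, LinearMap.add_apply, W.Qbil_comm c]
    rw [e4, W.Qbil_comm a c, e2] at e1
    rw [W.Qbil_comm a c] at e3 ⊢
    rw [W.Qbil_comm c (W.Q a x)] at e1 ⊢
    rw [e3] at e1 ⊢
    rw [← sub_eq_zero] at e1 ⊢
    rw [← neg_eq_zero, ← e1]; abel
  · rcases eq_or_ne a 0 with rfl | ha
    · simp [W.Q_zero]
    obtain ⟨p, hp⟩ := hdiv.exists_isInv ha
    ext x
    -- `Q_{a,c} = Q_a V_{c,a⁻¹} = V_{a⁻¹,c} Q_a`.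
    have r1 : ∀ y, W.Qbil a c y = W.Qbil c (W.Q a y) p := fun y => by
      rw [← hp.symm.Qbil_inv_Q, hp.Q_Q']
    have r2 : ∀ y, W.Qbil a c y = W.Q a (W.Qbil p y c) := fun y => by
      rw [← hp.symm.Q_Qbil_inv, hp.Q_Q]
    have e := hdiv.Qbil_V (W.Q a b) c p x
    rw [← r1, W.QJ3] at e
    simp only [LinearMap.add_apply, Module.End.mul_apply] at e ⊢
    rw [e, ← r2, ← r1]
end

section
/- Let (J,Q,1) be a weak quadratic Jordan algebra over a field k. Suppose that for all invertible a, y ∈ J there exists a generalized derivation δ (i.e., δ = δ₊ + δ₋ with δ₊ a derivation and δ₋ an anti-derivation of J) such that δ(a) = y. Then the linearized identities (QJ2*) and (QJ3*) hold for all a₁, a₂, b ∈ J, so J is a quadratic Jordan algebra. -/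
/-!
The linearized identities are reached by different routes, according to the scalars available.

If `2 ≠ 0`, comparing (QJ2) for `a + d` and `a - d` gives (QJ2*). In particular `2 Q_a` is expressed
through the circle product `a ∘ b = {a 1 b}`, and after division by `2` the usual Jordan algebra
calculus yields that `V_{u,v}` acts as a derivation on the triple product (`TripleDer`) and the
identity `Star`; these imply (QJ3*) by `qj3Star`.

If `2 = 0` and there is a scalar outside `{0, 1}`, a Vandermonde argument separates the
homogeneous components of both (QJ2) and (QJ3). In these two cases derivations play no role.

There remains `k = 𝔽₂`. If `w = δ(1)` for a generalized derivation `δ`, then `Q_{1,w} = 0`; so by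
hypothesis `w ∘ x = 0` for every invertible `w`. Consider `N_a b = {a a b} + a² ∘ b`. The identities
(QJ2) and (QJ3), linearized as far as `𝔽₂` permits, give `a ∘ N_a b = N_a b`, `Q_a N_a = 0` and
`N_a³ = 0` (`N_cube`). If `z = N_a b` satisfies `N_a z = 0`, then `w = 1 + z + Q_z a²` is invertible
with inverse square `1 + z² + (Q_a z²)² + Q_z z`, and `w ∘ a = z`, so `z = 0` (`eq_zero_of_units`).
Together with nilpotency this gives `N = 0`, whose polarization is the cyclic identity
`{a b x} + {b a x} + (a ∘ b) ∘ x = 0`. From it (QJ2*), `TripleDer` and `Star` follow, and then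
(QJ3*) by `qj3Star` again.
-/

set_option linter.unusedSimpArgs false
set_option linter.unnecessarySeqFocus false

/-! ### The additive operations of a weak quadratic Jordan algebra -/

/-- The additive operations underlying a weak quadratic Jordan algebra, with scalars forgotten:
`q a x` is `x·Q_a` and `t a x b` is `x·Q_{a,b}`, the Jordan triple product `{a x b}`, so that
`x·V_{a,b} = t a b x`. The identity `{a x a} = 2 x·Q_a`, which over a field follows from
`Q_{2a} = 4 Q_a`, is kept as a field. -/
structure JordanOps (J : Type*) [AddCommGroup J] where
  e : J
  q : J → J → J
  t : J → J → J → J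
  q_add : ∀ a x y, q a (x + y) = q a x + q a y
  add_q : ∀ a b x, q (a + b) x = q a x + q b x + t a x b
  t_add : ∀ a x y b, t a (x + y) b = t a x b + t a y b
  add_t : ∀ a b x d, t (a + b) x d = t a x d + t b x d
  t_comm : ∀ a x b, t a x b = t b x a
  t_self : ∀ a x, t a x a = q a x + q a x
  q_one : ∀ x, q e x = x
  QJ2 : ∀ a b x, t a b (q a x) = q a (t b a x)
  QJ3 : ∀ a b x, q (q a b) x = q a (q b (q a x))

namespace JordanOps

section General

variable {J : Type*} [AddCommGroup J] (C : JordanOps J)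

/-- The circle product `a ∘ b = {a 1 b}`. -/
def c (a b : J) : J := C.t a C.e b

theorem mid_one (a b : J) : C.t a C.e b = C.c a b := rfl

theorem left_one (x b : J) : C.t C.e x b = C.c x b := by
  have h := C.QJ2 C.e x b
  rwa [C.q_one, C.q_one] at h

theorem c_comm (a b : J) : C.c a b = C.c b a := C.t_comm _ _ _

theorem c_both {x y v : J} (h : C.c x y = v) : C.c x y = v ∧ C.c y x = v :=
  ⟨h, (C.t_comm _ _ _).trans h⟩

theorem t_both {x y w v : J} (h : C.t x y w = v) : C.t x y w = v ∧ C.t w y x = v :=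
  ⟨h, (C.t_comm _ _ _).trans h⟩

theorem t_add_right (a b x d : J) : C.t d x (a + b) = C.t d x a + C.t d x b := by
  rw [C.t_comm, C.add_t, C.t_comm a, C.t_comm b]

theorem c_e (x : J) : C.c x C.e = x + x := by
  rw [c_comm, c, C.t_comm, ← c, ← C.left_one, C.t_self, C.q_one]

/-- Expansion rules valid in every characteristic: used as a simp set, they turn a linear
combination of identities into a sum of monomials in a canonical order. -/
theorem nfz :
    (∀ a x y, C.q a (x + y) = C.q a x + C.q a y) ∧
    (∀ a b x, C.q (a + b) x = C.q a x + C.q b x + C.t a x b) ∧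
    (∀ a x y b, C.t a (x + y) b = C.t a x b + C.t a y b) ∧
    (∀ a b x d, C.t (a + b) x d = C.t a x d + C.t b x d) ∧
    (∀ a b x d, C.t d x (a + b) = C.t d x a + C.t d x b) ∧
    (∀ a b d, C.c (a + b) d = C.c a d + C.c b d) ∧
    (∀ a b d, C.c d (a + b) = C.c d a + C.c d b) ∧
    (∀ a x, C.t a x a = C.q a x + C.q a x) ∧
    (∀ a b, C.t a C.e b = C.c a b) ∧
    (∀ x b, C.t C.e x b = C.c x b) ∧ (∀ x b, C.t b x C.e = C.c x b) ∧
    (∀ x, C.c C.e x = x + x) ∧ (∀ x, C.c x C.e = x + x) ∧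
    (∀ x, C.q C.e x = x) ∧
    (∀ a x b, C.t a x b = C.t b x a) ∧ (∀ a b, C.c a b = C.c b a) :=
  ⟨C.q_add, C.add_q, C.t_add, C.add_t, C.t_add_right, fun _ _ _ => C.add_t _ _ _ _,
    fun _ _ _ => C.t_add_right _ _ _ _, C.t_self, fun _ _ => rfl, C.left_one,
    fun x b => by rw [C.t_comm, C.left_one], fun x => by rw [c_comm, c_e], C.c_e, C.q_one,
    C.t_comm, C.c_comm⟩

/-- The linearized identity `Q_a V_{d,b} + Q_{a,d} V_{a,b} = V_{b,d} Q_a + V_{b,a} Q_{a,d}`,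
evaluated at `x`. -/
def QJ2Star : Prop := ∀ a d b x,
  C.t d b (C.q a x) + C.t a b (C.t a x d) = C.q a (C.t b d x) + C.t a (C.t b a x) d

/-- The linearized identity
`Q_{b·Q_a, b·Q_{a,d}} = Q_{a,d} Q_b Q_a + Q_a Q_b Q_{a,d}`, evaluated at `x`. -/
def QJ3Star : Prop := ∀ a d b x,
  C.t (C.q a b) x (C.t a b d) = C.q a (C.q b (C.t a x d)) + C.t a (C.q b (C.q a x)) d

/-- The endomorphisms `V_{u,v}` and `-V_{v,u}` form a derivation of the Jordan pair `(J, J)`: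
`{u v (Q_x y)} = {{u v x} y x} - Q_x {v u y}`. -/
def TripleDer : Prop := ∀ u v x y,
  C.t u v (C.q x y) + C.q x (C.t v u y) = C.t x y (C.t u v x)

/-- The identity `{x y {z y b}} = {x (Q_y b) z} + {x (Q_y z) b}`. -/
def Star : Prop := ∀ x y z b,
  C.t x y (C.t z y b) = C.t x (C.q y b) z + C.t x (C.q y z) b

variable {C}

/-- The left side of (QJ2*) is symmetric in `b` and `y`, because the right side is. -/
theorem QJ2Star.symm' (hF : C.QJ2Star) (a w b y : J) :
    C.t w b (C.q a y) + C.t a b (C.t a y w) = C.t w y (C.q a b) + C.t a y (C.t a b w) := by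
  rw [hF, hF, C.t_comm y, C.t_comm y]

theorem TripleDer.polar (hD : C.TripleDer) (u v x y z : J) :
    C.t u v (C.t x y z) + C.t x (C.t v u y) z = C.t (C.t u v x) y z + C.t x y (C.t u v z) := by
  linear_combination (norm := skip) hD u v (x + z) y - hD u v x y - hD u v z y
  simp only [C.nfz]
  abel

/-- The identity `Q_y {x b z} + {(Q_y x) z b} = {y x {y z b}}`, obtained by combining (QJ2*) with
the polarized derivation property. -/
theorem dual (hF : C.QJ2Star) (hD : C.TripleDer) (y x z b : J) :
    C.q y (C.t x b z) + C.t (C.q y x) z b = C.t y x (C.t y z b) := by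
  linear_combination (norm := skip) -hF y b z x - hD.polar y x y z b
  simp only [C.nfz]
  abel

/-- (QJ3*) follows from (QJ2*) together with the derivation property and `Star`, in every
characteristic. -/
theorem qj3Star (hF : C.QJ2Star) (hD : C.TripleDer) (hS : C.Star) : C.QJ3Star := by
  have sub_q : ∀ a x y, C.q a (x - y) = C.q a x - C.q a y := fun a x y =>
    eq_sub_of_add_eq (by rw [← C.q_add, sub_add_cancel])
  have t_sub : ∀ a b x y, C.t a b (x - y) = C.t a b x - C.t a b y := fun a b x y =>
    eq_sub_of_add_eq (by rw [← C.t_add_right, sub_add_cancel])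
  intro a d b x
  have h1 : C.q b (C.t a x d) = C.t b a (C.t b d x) - C.t (C.q b a) d x :=
    eq_sub_of_add_eq (dual hF hD b a d x)
  have h2 : C.q a (C.t b d x) = C.t a x (C.t d b a) - C.t d b (C.q a x) :=
    eq_sub_of_add_eq' (hD d b a x)
  have h3 := C.QJ2 a b (C.t b d x)
  rw [h2, t_sub] at h3
  have h4 := hD d (C.q b a) a x
  have h5 := hS d b a (C.q a x)
  have h6 := hS a b d (C.q a x)
  have h7 := hF.symm' a (C.t a b d) b x
  have h8 := hS a b a d
  have h9 := hF.symm' a (C.t a b d) b x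
  have h10 := C.QJ2 a (C.q b d) x
  have h11 := C.QJ2 a x (C.q b d)
  have h12 := hS (C.q a x) b a d
  rw [h1, sub_q, ← h3]
  rw [h8] at h7
  linear_combination (norm := skip) -h7 + h4 + h6 + (2 : ℤ) • h10 - (2 : ℤ) • h11 + h12
  simp only [C.nfz]
  abel

end General

/-! ### Algebras without 2-torsion -/

section Half

variable {J : Type*} [AddCommGroup J] {C : JordanOps J}

/-- (QJ2*) at `b = x = 1`: `b ∘ a² + 2 Q_a b = a ∘ (a ∘ b)`. It expresses `2 Q_a` through the
circle product, so that without 2-torsion the circle product controls everything. -/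
theorem K (hF : C.QJ2Star) (a b : J) :
    C.c b (C.q a C.e) + (C.q a b + C.q a b) = C.c a (C.c a b) := by
  linear_combination (norm := skip) hF a C.e b C.e
  simp only [C.nfz]
  abel

theorem K2 (hF : C.QJ2Star) (u v y : J) :
    C.t u v y + C.t u v y + C.c v (C.c u y) = C.c (C.c u v) y + C.c u (C.c v y) := by
  linear_combination (norm := skip) K hF (u + y) v - K hF u v - K hF y v
  simp only [C.nfz]
  abel

/-- A linear form of the Jordan identity for the circle product. -/
theorem jordan (hF : C.QJ2Star) (a b x : J) :
    C.c x (C.c (C.q a C.e) b) + C.c a (C.c b (C.c a x)) =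
      C.c (C.q a C.e) (C.c b x) + C.c (C.c a b) (C.c a x) := by
  linear_combination (norm := skip) congrArg (C.c x) (K hF a b) + congrArg (C.c a) (K2 hF a b x)
    - K hF a (C.c b x) - K2 hF a (C.c a b) x - (2 : ℤ) • hF a x C.e b
  simp only [C.nfz]
  abel

theorem jordan_polar (hF : C.QJ2Star) (a d b x : J) :
    C.c x (C.c (C.c a d) b) + C.c a (C.c b (C.c d x)) + C.c d (C.c b (C.c a x)) =
      C.c (C.c a d) (C.c b x) + C.c (C.c a b) (C.c d x) + C.c (C.c d b) (C.c a x) := by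
  linear_combination (norm := skip) jordan hF (a + d) b x - jordan hF a b x - jordan hF d b x
  simp only [C.nfz]
  abel

/-- The circle product with `b` is an anti-derivation. -/
theorem r1z (h2 : ∀ x : J, x + x = 0 → x = 0) (hF : C.QJ2Star) (a b x : J) :
    C.c b (C.q a x) + C.q a (C.c b x) = C.t a x (C.c b a) := by
  refine sub_eq_zero.1 (h2 _ ?_)
  have hA : C.c a a = C.q a C.e + C.q a C.e := C.t_self _ _
  have h := jordan_polar hF a b a x
  rw [hA] at h
  linear_combination (norm := skip) congrArg (C.c b) (K hF a x) + K hF a (C.c b x)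
    - K2 hF a x (C.c b a) + h - jordan hF a x b
  simp only [C.nfz]
  abel

theorem r1z_polar (h2 : ∀ x : J, x + x = 0 → x = 0) (hF : C.QJ2Star) (a d b x : J) :
    C.c b (C.t a x d) + C.t a (C.c b x) d = C.t a x (C.c b d) + C.t d x (C.c b a) := by
  linear_combination (norm := skip) r1z h2 hF (a + d) b x - r1z h2 hF a b x - r1z h2 hF d b x
  simp only [C.nfz]
  abel

theorem tripleDer_of_half (h2 : ∀ x : J, x + x = 0 → x = 0) (hF : C.QJ2Star) : C.TripleDer := by
  intro u v x y
  refine sub_eq_zero.1 (h2 _ ?_)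
  linear_combination (norm := skip) K2 hF u v (C.q x y) + congrArg (C.q x) (K2 hF v u y)
    - congrArg (C.t x y) (K2 hF u v x) + r1z h2 hF x (C.c u v) y
    + congrArg (C.c u) (r1z h2 hF x v y) - congrArg (C.c v) (r1z h2 hF x u y)
    + r1z_polar h2 hF x (C.c v x) u y - r1z_polar h2 hF x (C.c u x) v y
    - r1z h2 hF x u (C.c v y) + r1z h2 hF x v (C.c u y)
  simp only [C.nfz]
  abel

theorem star_of_half (h2 : ∀ x : J, x + x = 0 → x = 0) (hD : C.TripleDer) : C.Star := by
  intro x y z b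
  refine sub_eq_zero.1 (h2 _ ?_)
  linear_combination (norm := skip) -hD.polar b y z y x - hD.polar z y x y b
  simp only [C.nfz]
  abel

end Half

/-! ### Identities in characteristic two -/

section CharTwo

variable {J : Type*} [AddCommGroup J] [Module (ZMod 2) J] (C : JordanOps J)

theorem self_add (x : J) : x + x = 0 := by
  rw [← two_smul (ZMod 2), show (2 : ZMod 2) = 0 from rfl, zero_smul]

theorem t_self_two (a x : J) : C.t a x a = 0 := by rw [C.t_self, self_add]

/-- Expansion rules in characteristic two. The proofs below all end in the same way: the certificate
given to `linear_combination` is expanded by `simp only [C.nf]`, and `match_scalars` compares the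
coefficients in `ZMod 2` of the resulting monomials. -/
theorem nf :
    (∀ a x y, C.q a (x + y) = C.q a x + C.q a y) ∧
    (∀ a b x, C.q (a + b) x = C.q a x + C.q b x + C.t a x b) ∧
    (∀ a x y b, C.t a (x + y) b = C.t a x b + C.t a y b) ∧
    (∀ a b x d, C.t (a + b) x d = C.t a x d + C.t b x d) ∧
    (∀ a b x d, C.t d x (a + b) = C.t d x a + C.t d x b) ∧
    (∀ a b d, C.c (a + b) d = C.c a d + C.c b d) ∧
    (∀ a b d, C.c d (a + b) = C.c d a + C.c d b) ∧
    (∀ a x, C.t a x a = 0) ∧ (∀ a, C.c a a = 0) ∧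
    (∀ a b, C.t a C.e b = C.c a b) ∧
    (∀ x b, C.t C.e x b = C.c x b) ∧ (∀ x b, C.t b x C.e = C.c x b) ∧
    (∀ x, C.c C.e x = 0) ∧ (∀ x, C.c x C.e = 0) ∧
    (∀ x, C.q C.e x = x) ∧
    (∀ a, C.q a 0 = 0) ∧ (∀ a, C.q 0 a = 0) ∧
    (∀ a b, C.t a 0 b = 0) ∧ (∀ a b, C.t a b 0 = 0) ∧ (∀ a b, C.t 0 a b = 0) ∧
    (∀ a, C.c a 0 = 0) ∧ (∀ a, C.c 0 a = 0) ∧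
    (∀ a x b, C.t a x b = C.t b x a) ∧ (∀ a b, C.c a b = C.c b a) := by
  have t0 : ∀ a b, C.t a 0 b = 0 := fun a b => by simpa using C.t_add a 0 0 b
  have t0' : ∀ a b, C.t a b 0 = 0 := fun a b => by simpa using C.t_add_right 0 0 b a
  have t0'' : ∀ a b, C.t 0 a b = 0 := fun a b => by rw [C.t_comm, t0']
  refine ⟨C.q_add, C.add_q, C.t_add, C.add_t, C.t_add_right, fun _ _ _ => C.add_t _ _ _ _,
    fun _ _ _ => C.t_add_right _ _ _ _, C.t_self_two, fun _ => C.t_self_two _ _,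
    fun _ _ => rfl, C.left_one, fun x b => by rw [C.t_comm, C.left_one],
    fun x => by rw [c_comm, c_e, self_add], fun x => by rw [c_e, self_add], C.q_one,
    fun a => by simpa using C.q_add a 0 0, fun a => ?_, t0, t0', t0'', fun _ => t0' _ _,
    fun _ => t0'' _ _, C.t_comm, C.c_comm⟩
  have := C.add_q 0 0 a
  rw [t0'', add_zero, add_zero] at this
  simpa using this

theorem onV {r : J} (s : J) (h : r = 0) : C.c r s = 0 := by rw [h]; simp only [C.nf]
theorem onQ {r : J} (s : J) (h : r = 0) : C.q s r = 0 := by rw [h]; simp only [C.nf]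
theorem onO {r : J} (s w : J) (h : r = 0) : C.t r s w = 0 := by rw [h]; simp only [C.nf]

/-- (QJ2) as a vanishing sum. -/
theorem qj2_1 (a u x : J) :
    C.t a u (C.q a x) + C.q a (C.t u a x) = 0 := by
  linear_combination (norm := skip) (1 : ZMod 2) • C.QJ2 a u x
  match_scalars <;> rfl

theorem VQ (a b : J) :
    C.c a (C.q a b) + C.q a (C.c a b) = 0 := by
  linear_combination (norm := skip) (1 : ZMod 2) • C.qj2_1 a C.e b
  simp only [C.nf]
  match_scalars <;> rfl

/-- The sum of the two components of (QJ2) for `a + b` that are linear in `a` or in `b`. Without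
further scalars the two components cannot be separated. -/
theorem qj2_2 (a b u x : J) :
    C.t a u (C.t a x b) + C.t a (C.t u a x) b + C.t a u (C.q b x) + C.q b (C.t u a x) +
    C.t b u (C.q a x) + C.q a (C.t u b x) + C.t b u (C.t a x b) + C.t a (C.t u b x) b = 0 := by
  linear_combination (norm := skip) (1 : ZMod 2) • C.QJ2 (a + b) u x + C.QJ2 a u x + C.QJ2 b u x
  simp only [C.nf]
  match_scalars <;> rfl

/-- `V_{a²} = V_a²`, where `V_a` is the circle product with `a`. -/
theorem Va2 (a b : J) :
    C.c (C.q a C.e) b + C.c a (C.c a b) = 0 := by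
  linear_combination (norm := skip) (1 : ZMod 2) • C.qj2_2 C.e a b C.e
  simp only [C.nf]
  match_scalars <;> rfl

theorem Qaa2 (a b : J) :
    C.t a b (C.q a C.e) + C.q a (C.c a b) = 0 := by
  linear_combination (norm := skip) (1 : ZMod 2) • C.qj2_1 a b C.e
  simp only [C.nf]
  match_scalars <;> rfl

/-- The component of (QJ2) that is linear in each of `a`, `b`, `d`. -/
theorem qj2_3 (a b d u x : J) :
    C.t a u (C.t b x d) + C.t b (C.t u a x) d + C.t b u (C.t a x d) + C.t a (C.t u b x) d +
    C.t d u (C.t a x b) + C.t a (C.t u d x) b = 0 := by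
  linear_combination (norm := skip) (1 : ZMod 2) • C.QJ2 (a + b + d) u x + C.QJ2 (a + b) u x +
    C.QJ2 (a + d) u x + C.QJ2 (b + d) u x + C.QJ2 a u x + C.QJ2 b u x + C.QJ2 d u x
  simp only [C.nf]
  match_scalars <;> rfl

/-- In characteristic two the circle product satisfies the Jacobi identity. -/
theorem Jac (a b x : J) :
    C.c (C.c a b) x + C.c a (C.c b x) + C.c b (C.c a x) = 0 := by
  linear_combination (norm := skip) (1 : ZMod 2) • C.qj2_3 C.e a b x C.e
  simp only [C.nf]
  match_scalars <;> rfl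

/-- The part of (QJ3) for `Q_{a+b}(u+v)` that involves both `a` and `b` and both `u` and `v`. -/
theorem qj3_22 (a b u v x : J) :
    C.t (C.q a u) x (C.t a v b) + C.t (C.q a u) x (C.q b v) + C.t (C.q a v) x (C.t a u b) +
    C.t (C.q a v) x (C.q b u) + C.t (C.t a u b) x (C.t a v b) + C.t (C.t a u b) x (C.q b v) +
    C.t (C.t a v b) x (C.q b u) + C.t a (C.t u (C.q a x) v) b + C.q b (C.t u (C.q a x) v) +
    C.q a (C.t u (C.t a x b) v) + C.t a (C.t u (C.t a x b) v) b + C.q b (C.t u (C.t a x b) v) +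
    C.q a (C.t u (C.q b x) v) + C.t a (C.t u (C.q b x) v) b = 0 := by
  linear_combination (norm := skip) (1 : ZMod 2) • C.QJ3 (a + b) (u + v) x + C.QJ3 (a + b) u x +
    C.QJ3 (a + b) v x + C.QJ3 a (u + v) x + C.QJ3 a u x + C.QJ3 a v x + C.QJ3 b (u + v) x +
    C.QJ3 b u x + C.QJ3 b v x
  simp only [C.nf]
  match_scalars <;> rfl

theorem Va3 (a b : J) :
    C.c (C.q a a) b + C.c a (C.c (C.q a C.e) b) + C.q a (C.c a b) = 0 := by
  linear_combination (norm := skip) (1 : ZMod 2) • C.VQ a b + C.Qaa2 a b + C.VQ a (C.c a b) +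
    C.onV a (C.Va2 a b) + C.onV a (C.VQ a b) + C.qj3_22 C.e a C.e a b
  simp only [C.nf]
  match_scalars <;> rfl

theorem g2 (a b x : J) :
    C.t a b x + C.t b a x + C.c (C.c a b) x + C.c b (C.q a x) + C.q a (C.c b x) +
    C.t a b (C.c a x) + C.c a (C.t b a x) = 0 := by
  linear_combination (norm := skip) (1 : ZMod 2) • C.Jac a b x + C.qj2_2 C.e a b x
  simp only [C.nf]
  match_scalars <;> rfl

theorem P (y a m d : J) :
    C.c y (C.t a m d) + C.t a (C.c y m) d + C.t a y (C.c d m) + C.t d y (C.c a m) +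
    C.c a (C.t y d m) + C.c d (C.t y a m) = 0 := by
  linear_combination (norm := skip) (1 : ZMod 2) • C.qj2_3 C.e a d y m
  simp only [C.nf]
  match_scalars <;> rfl

theorem H31 (a b : J) :
    C.t a a b + C.c (C.q a C.e) b + C.c (C.q a C.e) (C.c a b) + C.q a (C.c a b) +
    C.t a (C.q a C.e) b = 0 := by
  linear_combination (norm := skip) (1 : ZMod 2) • C.Va2 a b + C.VQ a b + C.Qaa2 a (C.c a b) +
    C.Va2 a (C.c a b) + C.VQ a (C.c a b) + C.onO b a (C.Va2 a a) + C.onV b (C.Qaa2 a a) +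
    C.Va2 a (C.t a a b) + C.onV b (C.Va2 a (C.q a C.e)) + C.Jac a b (C.q a a) +
    C.onV b (C.Va3 a a) + C.qj2_2 C.e a b a + C.onV a (C.qj2_2 C.e a b a) +
    C.qj2_3 C.e a (C.q a C.e) b a + C.qj3_22 C.e a a b C.e
  simp only [C.nf]
  match_scalars <;> rfl

/-- For `N_a b = {a a b} + a² ∘ b`, this says `a ∘ N_a b = N_a b`. -/
theorem VN (a b : J) :
    C.t a a b + C.c (C.q a C.e) b + C.c a (C.t a a b + C.c (C.q a C.e) b) = 0 := by
  linear_combination (norm := skip) (1 : ZMod 2) • C.Va2 a b + C.Va3 a b + C.qj2_2 C.e a b a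
  simp only [C.nf]
  match_scalars <;> rfl

/-- For `N_a b = {a a b} + a² ∘ b`, this says `N_a (a ∘ b) = N_a b`. -/
theorem NV (a b : J) :
    C.t a a b + C.c (C.q a C.e) b + C.t a a (C.c a b) + C.c (C.q a C.e) (C.c a b) = 0 := by
  linear_combination (norm := skip) (1 : ZMod 2) • C.VQ a b + C.Va2 a b + C.Va3 a b +
    C.Jac a b (C.q a C.e) + C.onV b (C.Va2 a a) + C.qj2_2 C.e a a b + C.qj2_2 C.e a b a
  simp only [C.nf]
  match_scalars <;> rfl

/-- The part of (QJ3) for `Q_{a+b} u` that involves both `a` and `b`. -/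
theorem qj3_21 (a b u x : J) :
    C.t (C.q a u) x (C.t a u b) + C.t (C.q a u) x (C.q b u) + C.q (C.t a u b) x +
    C.t (C.t a u b) x (C.q b u) + C.t a (C.q u (C.q a x)) b + C.q b (C.q u (C.q a x)) +
    C.q a (C.q u (C.t a x b)) + C.t a (C.q u (C.t a x b)) b + C.q b (C.q u (C.t a x b)) +
    C.q a (C.q u (C.q b x)) + C.t a (C.q u (C.q b x)) b = 0 := by
  linear_combination (norm := skip) (1 : ZMod 2) • C.QJ3 (a + b) u x + C.QJ3 a u x + C.QJ3 b u x
  simp only [C.nf]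
  match_scalars <;> rfl

/-- For `N_a b = {a a b} + a² ∘ b`, this says `Q_a (N_a b) = 0`. -/
theorem QN (a b : J) :
    C.q a (C.t a a b + C.c (C.q a C.e) b) = 0 := by
  linear_combination (norm := skip) (1 : ZMod 2) • C.VQ a b + C.VQ a (C.q a b) +
    C.VQ a (C.c a b) + C.onQ a (C.VQ a b) + C.onQ a (C.Va2 a b) + C.qj2_1 a b a +
    C.qj3_21 C.e a a b
  simp only [C.nf]
  match_scalars <;> rfl

theorem E (a b : J) :
    C.t a a b + C.c (C.q a C.e) b + C.t b b a + C.c (C.q b C.e) a + C.q (C.c a b) C.e +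
    C.c (C.q a C.e) (C.q b C.e) + C.q a (C.q b C.e) + C.q b (C.q a C.e) +
    C.t a (C.c a b) b = 0 := by
  linear_combination (norm := skip) (1 : ZMod 2) • C.H31 a b + C.H31 b a + C.qj3_21 a b C.e C.e
  simp only [C.nf]
  match_scalars <;> rfl

/-- For `N_a b = {a a b} + a² ∘ b`, this says `b ∘ N_a b = a ∘ N_b a`. -/
theorem bz (a b : J) :
    C.c b (C.t a a b + C.c (C.q a C.e) b) + C.c a (C.t b b a + C.c (C.q b C.e) a) = 0 := by
  linear_combination (norm := skip) (1 : ZMod 2) • C.Va2 b (C.q a C.e) + C.E a b + C.NV a b +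
    C.Qaa2 a b + C.Va2 b (C.q a a) + C.g2 b a (C.q a C.e) + C.g2 a b b + C.g2 a (C.q b C.e) a +
    C.onQ b (C.Va2 a a) + C.g2 a (C.c a b) b + C.P b a a b + C.P a a a (C.q b C.e) +
    C.onO a b (C.Va2 a b) + C.onO a a (C.Va2 b a) + C.onQ a (C.Va2 b a) + C.onV b (C.Qaa2 a b) +
    C.P (C.c a b) a a b + C.onV b (C.g2 a b a) + C.Jac a b (C.t a a b) + C.P a a (C.c a b) b +
    C.onV a (C.P a a b b) + C.qj2_2 a b a C.e + C.qj3_21 C.e a b C.e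
  simp only [C.nf]
  match_scalars <;> rfl

/-- For `N_a b = {a a b} + a² ∘ b`, this says `(a ∘ b) ∘ N_a b = 0`. -/
theorem A (a b : J) :
    C.c (C.c a b) (C.t a a b + C.c (C.q a C.e) b) = 0 := by
  linear_combination (norm := skip) (1 : ZMod 2) • C.Va3 a (C.q b C.e) + C.Va2 a (C.q b C.e) +
    C.Va2 b (C.q a C.e) + C.bz a b + C.Va2 b (C.q a a) + C.P a a b b + C.onQ a (C.Va2 b a) +
    C.g2 a b (C.c a b) + C.onV a (C.Va2 b (C.q a C.e)) + C.onV b (C.Va3 a b) +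
    C.Jac a b (C.c b (C.q a C.e)) + C.P b a a b + C.P (C.c a b) a a b + C.P b a a (C.c a b) +
    C.P a a b (C.c a b) + C.P a b a (C.c a b) + C.qj2_3 a b (C.c a b) a C.e
  simp only [C.nf]
  match_scalars <;> rfl

/-- For `N_a b = {a a b} + a² ∘ b`, this says `N_a b² = b ∘ N_a b`. -/
theorem B (a b : J) :
    C.t a a (C.q b C.e) + C.c (C.q a C.e) (C.q b C.e) +
    C.c b (C.t a a b + C.c (C.q a C.e) b) = 0 := by
  linear_combination (norm := skip) (1 : ZMod 2) • C.A a b + C.NV a (C.q b C.e) +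
    C.onO a a (C.Va2 b a) + C.Jac b (C.q a C.e) (C.c a b) + C.onV (C.q a C.e) (C.Va2 b a) +
    C.onV b (C.NV a b) + C.P a a (C.c a b) b + C.P a a b (C.c a b) + C.qj2_3 a b (C.c a b) a C.e
  simp only [C.nf]
  match_scalars <;> rfl

/-! ### The operator `N` and its nilpotency -/

theorem eq_of_add {x y : J} (h : x + y = 0) : x = y := by
  linear_combination (norm := skip) (1 : ZMod 2) • h
  match_scalars <;> rfl

/-- The computation behind `N_a³ = 0`. Here `z` plays the role of `N_a b`, and `m` that of
`N_a z`; since `a² ∘ m = m`, the conclusion reads `N_a m = 0`. -/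
theorem N3core (a z m : J) (haz : C.c a z = z) (hqz : C.q a z = 0) (hN : C.t a a z = m + z)
    (ham : C.c a m = m) (hqm : C.q a m = 0) (hzm : C.c z m = 0) : m + C.t a a m = 0 := by
  replace haz := C.c_both haz
  replace ham := C.c_both ham
  replace hzm := C.c_both hzm
  replace hN := C.t_both hN
  have a2z : C.c (C.q a C.e) z = z := by
    linear_combination (norm := skip) (1 : ZMod 2) • C.Va2 a z
    simp only [C.nf, haz]
    match_scalars <;> rfl
  replace a2z := C.c_both a2z
  have a2m : C.c (C.q a C.e) m = m := by
    linear_combination (norm := skip) (1 : ZMod 2) • C.Va2 a m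
    simp only [C.nf, ham]
    match_scalars <;> rfl
  replace a2m := C.c_both a2m
  have qzz : C.c z (C.q z a) = C.q z z := by
    linear_combination (norm := skip) (1 : ZMod 2) • C.VQ z a
    simp only [C.nf, haz]
    match_scalars <;> rfl
  replace qzz := C.c_both qzz
  have zaa : C.c z (C.q a a) = z := by
    linear_combination (norm := skip) (1 : ZMod 2) • C.Va3 a z
    simp only [C.nf, haz, hqz, a2z]
    match_scalars <;> rfl
  replace zaa := C.c_both zaa
  have aaa : C.c a (C.q a a) = 0 := by
    linear_combination (norm := skip) (1 : ZMod 2) • C.VQ a a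
    simp only [C.nf]
    match_scalars <;> rfl
  replace aaa := C.c_both aaa
  have aqza : C.c a (C.q z a) = m := by
    linear_combination (norm := skip) (1 : ZMod 2) • C.g2 z a a
    simp only [C.nf, haz, hN]
    match_scalars <;> rfl
  replace aqza := C.c_both aqza
  have maz : C.t m a z = 0 := by
    linear_combination (norm := skip) (1 : ZMod 2) • C.P a z a m + C.g2 a z m
    simp only [C.nf, haz, hqz, hqm, hzm, ham]
    match_scalars <;> rfl
  replace maz := C.t_both maz
  have qzaaz : C.t (C.q z a) a z = 0 := by
    linear_combination (norm := skip) (1 : ZMod 2) • C.qj2_1 z a a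
    simp only [C.nf]
    match_scalars <;> rfl
  replace qzaaz := C.t_both qzaaz
  have aam : C.t a a (C.q z a) = C.t a a m := by
    linear_combination (norm := skip) (1 : ZMod 2) • C.Va2 a (C.q z a) + C.NV a (C.q z a)
    simp only [C.nf, aqza, ham, a2m]
    match_scalars <;> rfl
  replace aam := C.t_both aam
  have azqaa : C.t a z (C.q a a) = 0 := by
    linear_combination (norm := skip) (1 : ZMod 2) • C.qj2_1 a z a
    simp only [C.nf, hN, hqm, hqz]
    match_scalars <;> rfl
  replace azqaa := C.t_both azqaa
  have k1 : C.q z (C.q a a) = C.q z a + C.q a (C.q z a) := by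
    linear_combination (norm := skip) (1 : ZMod 2) • C.g2 z a (C.q a a) + C.qj2_2 a z a a +
      C.qj3_21 C.e a z a
    simp only [C.nf, haz, hqz, hN, ham, hqm, hzm, a2z, a2m, qzz, zaa, aaa, aqza, maz, qzaaz,
      aam, azqaa]
    match_scalars <;> rfl
  have k2 : C.c (C.q a (C.q z a)) z = m + C.t a a m := by
    linear_combination (norm := skip) (1 : ZMod 2) • C.g2 z a (C.q a a) + C.qj2_2 a z a a +
      C.qj3_21 C.e a z a + C.qj3_21 C.e z a a
    simp only [C.nf, haz, hqz, hN, ham, hqm, hzm, a2z, a2m, qzz, zaa, aaa, aqza, maz, qzaaz,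
      aam, azqaa, k1]
    match_scalars <;> rfl
  replace k2 := C.c_both k2
  linear_combination (norm := skip) (1 : ZMod 2) • C.VQ z (C.q a a)
  simp only [C.nf, zaa, qzz, k1, k2]
  match_scalars <;> rfl

/-- The operator `N_a b = {a a b} + a² ∘ b`, which measures the failure of the cyclic identity
`{a b x} + {b a x} + (a ∘ b) ∘ x = 0`: the latter is the polarization of `N_a x = 0` in `a`. -/
def N (a b : J) : J := C.t a a b + C.c (C.q a C.e) b

theorem c_N (a b : J) : C.c a (C.N a b) = C.N a b := (eq_of_add (C.VN a b)).symm

theorem q_N (a b : J) : C.q a (C.N a b) = 0 := C.QN a b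

theorem a2_of_c {a z : J} (h : C.c a z = z) : C.c (C.q a C.e) z = z := by
  have := eq_of_add (C.Va2 a z)
  rw [this, h, h]

theorem N_N (a b : J) : C.N (C.N a b) a = 0 := by
  set z := C.N a b with hz
  have haz : C.c z a = z := (C.t_comm _ _ _).trans (C.c_N a b)
  have h1 : C.t z z z = 0 := C.t_self_two _ _
  have h2 := C.NV z a
  have h3 : C.c (C.q z C.e) a = 0 := by
    linear_combination (norm := skip) (1 : ZMod 2) • C.Va2 z a
    simp only [haz, C.nf]
    match_scalars <;> rfl
  have h4 : C.c (C.q z C.e) z = 0 := by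
    linear_combination (norm := skip) (1 : ZMod 2) • C.Va2 z z
    simp only [C.nf]
    match_scalars <;> rfl
  rw [haz, h1, h4, add_zero, add_zero] at h2
  exact h2

theorem N_cube (a b : J) : C.N a (C.N a (C.N a b)) = 0 := by
  have h1 := C.a2_of_c (C.c_N a b)
  have h2 := C.a2_of_c (C.c_N a (C.N a b))
  have h3 : C.c (C.N a b) (C.N a (C.N a b)) = 0 := by
    have h := C.bz a (C.N a b)
    have h' := C.N_N a b
    rw [N] at h'
    rw [h', ← N] at h
    simpa only [C.nf, add_zero] using h
  have := C.N3core a (C.N a b) (C.N a (C.N a b)) (C.c_N a b) (C.q_N a b) ?_ (C.c_N _ _)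
    (C.q_N _ _) h3
  · conv_lhs => rw [N, h2, add_comm]
    exact this
  · conv_rhs => rw [N, h1]
    rw [add_assoc, self_add, add_zero]

/-- If `z = a ∘ z` is killed by `Q_a` and `N_a`, and `N_z a = 0`, then the element
`w = 1 + z + Q_z a²` is invertible and `w ∘ a = z`. Hence `z = 0` as soon as invertible elements
annihilate everything under the circle product. -/
theorem eq_zero_of_units (hU : ∀ w, Function.Bijective (C.q w) → ∀ x, C.c w x = 0) {a z : J}
    (haz : C.c a z = z) (hqz : C.q a z = 0) (hN : C.N a z = 0) (hN' : C.N z a = 0) : z = 0 := by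
  have VQ' : ∀ x y, C.c x (C.q x y) = C.q x (C.c x y) := fun x y => eq_of_add (C.VQ x y)
  have Va2' : ∀ x y, C.c (C.q x C.e) y = C.c x (C.c x y) := fun x y => eq_of_add (C.Va2 x y)
  have cc : ∀ x y, C.c x y = C.c y x := fun x y => C.t_comm _ _ _
  have cself : ∀ x, C.c x x = 0 := fun x => C.t_self_two _ _
  have q0 : ∀ x, C.q x 0 = 0 := fun x => by simp only [C.nf]
  have c0 : ∀ x, C.c x 0 = 0 := fun x => by simp only [C.nf]
  have Za : ∀ x, C.q a (C.q z (C.q a x)) = 0 := fun x => by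
    rw [← C.QJ3, hqz]; simp only [C.nf]
  have Zab : ∀ x y, C.q a (C.t z (C.q a y) x) = 0 := fun x y => by
    have h := C.QJ3 a (z + x) y
    simp only [C.q_add, C.add_q, hqz, zero_add, C.QJ3, Za] at h
    simpa using h
  have Qs : ∀ x, C.q (C.q z C.e) x = C.q z (C.q z x) := fun x => by rw [C.QJ3, C.q_one]
  have QA : ∀ x, C.q (C.q a C.e) x = C.q a (C.q a x) := fun x => by rw [C.QJ3, C.q_one]
  have a2z := C.a2_of_c haz
  -- The elements `A = a²`, `s = z²`, `t = Q_z a²`, `t' = Q_a z²` and `r = Q_z z`, which satisfy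
  -- `s = t + t'`, together with the squares `S2`, `T2`, `U2` of `s`, `t`, `t'`.
  obtain ⟨A, hA⟩ : ∃ A, C.q a C.e = A := ⟨_, rfl⟩
  obtain ⟨s, hs⟩ : ∃ s, C.q z C.e = s := ⟨_, rfl⟩
  obtain ⟨t, ht⟩ : ∃ t, C.q z A = t := ⟨_, rfl⟩
  obtain ⟨t', ht'⟩ : ∃ t', C.q a s = t' := ⟨_, rfl⟩
  obtain ⟨r, hr⟩ : ∃ r, C.q z z = r := ⟨_, rfl⟩
  rw [hA] at a2z QA
  rw [hs] at Qs
  have Qt : ∀ x, C.q t x = C.q z (C.q a (C.q a (C.q z x))) := fun x => by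
    rw [← ht, C.QJ3, QA]
  have Qt' : ∀ x, C.q t' x = C.q a (C.q z (C.q z (C.q a x))) := fun x => by
    rw [← ht', C.QJ3, Qs]
  have cs : ∀ x, C.c s x = C.c z (C.c z x) := fun x => by rw [← hs, Va2']
  have cA : ∀ x, C.c A x = C.c a (C.c a x) := fun x => by rw [← hA, Va2']
  have cza : C.c z a = z := (cc _ _).trans haz
  have csz : C.c s z = 0 := by rw [cs, cself, c0]
  have csa : C.c s a = 0 := by rw [cs, cza, cself]
  have czr : C.c z r = 0 := by rw [← hr, VQ', cself, q0]
  have csr : C.c s r = 0 := by rw [cs, czr, c0]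
  have czt : C.c z t = r := by rw [← ht, VQ', cc z A, a2z, hr]
  have cst : C.c s t = 0 := by rw [cs, czt, czr]
  have cAs : C.c A s = 0 := by rw [cA, cc a s, csa, c0]
  have zza : C.t z z a = 0 := by
    rw [N, hs, csa, add_zero] at hN'
    exact hN'
  have hst : s = t + t' := by
    linear_combination (norm := skip) (1 : ZMod 2) • C.E a z + hN
    simp only [hA, hs, haz, ht, ht', cAs, csa, N, C.t_both zza, zza]
    match_scalars <;> rfl
  have ht's : t' = s + t := by
    linear_combination (norm := skip) (1 : ZMod 2) • hst
    match_scalars <;> rfl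
  have htst : t = s + t' := by
    linear_combination (norm := skip) (1 : ZMod 2) • hst
    match_scalars <;> rfl
  have czt' : C.c z t' = r := by
    rw [ht's, ← czt]
    linear_combination (norm := skip) (1 : ZMod 2) • csz
    simp only [C.nf]
    match_scalars <;> rfl
  have ctt' : C.c t t' = 0 := by
    rw [ht's]
    linear_combination (norm := skip) (1 : ZMod 2) • cst
    simp only [C.nf]
    match_scalars <;> rfl
  have cat' : C.c a t' = 0 := by rw [← ht', VQ', cc a s, csa, q0]
  have cat : C.c a t = 0 := by
    linear_combination (norm := skip) (1 : ZMod 2) • cat' + csa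
    rw [ht's]
    simp only [C.nf]
    match_scalars <;> rfl
  have qat : C.q a t = 0 := by rw [← ht, ← hA, Za]
  have qat' : C.q a t' = t' := by
    conv_lhs => rw [ht's, C.q_add, ht', qat, add_zero]
  obtain ⟨S2, hS2⟩ : ∃ x, C.q s C.e = x := ⟨_, rfl⟩
  obtain ⟨T2, hT2⟩ : ∃ x, C.q t C.e = x := ⟨_, rfl⟩
  obtain ⟨U2, hU2⟩ : ∃ x, C.q t' C.e = x := ⟨_, rfl⟩
  have qzs : C.q z s = S2 := by rw [← hS2, Qs, hs]
  have hSTU : S2 = T2 + U2 := by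
    rw [← hS2, hst, C.add_q, hT2, hU2, mid_one, ctt', add_zero]
  have qzt' : C.q z t' = T2 := by rw [← hT2, Qt, hs, ht', qat']
  have qzt : C.q z t = U2 := by
    conv_lhs => rw [htst, C.q_add, qzs, qzt']
    linear_combination (norm := skip) (1 : ZMod 2) • hSTU
    match_scalars <;> rfl
  have qaU : C.q a U2 = U2 := by
    conv_rhs => rw [← hU2, Qt', hA, ht, qzt]
  have qaT : C.q a T2 = 0 := by rw [← qzt', ← ht', Za]
  obtain ⟨X, hX⟩ : ∃ x, C.q z T2 = x := ⟨_, rfl⟩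
  obtain ⟨Y, hY⟩ : ∃ x, C.q z U2 = x := ⟨_, rfl⟩
  obtain ⟨Z5, hZ5⟩ : ∃ x, C.q z r = x := ⟨_, rfl⟩
  obtain ⟨Z7, hZ7⟩ : ∃ x, C.q z Z5 = x := ⟨_, rfl⟩
  have qts : C.q t s = Y := by rw [Qt, qzs, hSTU, C.q_add, qaT, qaU, zero_add, qaU, hY]
  have qtt : C.q t t = Y := by rw [Qt, qzt, qaU, qaU, hY]
  have qtU : C.q t U2 = 0 := by rw [Qt, ← qaU, Za]; simp only [C.nf]
  have qre : C.q r C.e = X + Y := by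
    rw [← hr, C.QJ3, hs, qzs, hSTU, C.q_add, hX, hY]
  have zzA : C.t z z A = 0 := by
    have h := C.B z a
    rw [show C.t z z a + C.c (C.q z C.e) a = 0 from hN', hA, hs, cc s A, cAs, c0, add_zero,
      add_zero] at h
    exact h
  have zzt : C.t z z t = 0 := by
    have h := C.qj2_1 z z A
    rw [zzA, q0, add_zero, ht] at h
    exact h
  have zst : C.t z s t = Z5 := by
    have h := C.H31 z t
    rw [hs, czt, cst, csr, hZ5, zzt, add_zero, add_zero, zero_add] at h
    exact (eq_of_add h).symm
  have qar : C.q a r = 0 := by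
    have h := Zab C.e s
    rwa [ht', C.t_comm, C.left_one, cc t' z, czt'] at h
  have qtz : C.q t z = 0 := by rw [Qt, hr, qar, q0, q0]
  have ctz : C.c t z = r := (cc _ _).trans czt
  have qtr : C.q t r = 0 := by rw [← ctz, ← VQ', qtz, c0]
  have czT : C.c z T2 = Z5 := by rw [← qzt', VQ', czt', hZ5]
  have czU : C.c z U2 = Z5 := by rw [← qzt, VQ', czt, hZ5]
  have czZ : C.c z Z5 = 0 := by rw [← hZ5, VQ', czr, q0]
  have csT : C.c s T2 = 0 := by rw [cs, czT, czZ]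
  have cT : ∀ x, C.c T2 x = C.c t (C.c t x) := fun x => by rw [← hT2, Va2']
  have ctr : C.c t r = Z5 := by
    rw [← ctz, ← cT, cc, czT]
  have ztr : C.t z r t = C.t t t z + Z5 := by
    linear_combination (norm := skip) (1 : ZMod 2) • C.E z t
    simp only [hs, cst, hT2, czt, csT, hX, qts, zzt, qre, cc T2 z, czT]
    match_scalars <;> rfl
  have cTr : C.c T2 r = Z7 := by
    have h := C.Va3 t z
    rw [hT2, cc T2 z, czT, ctz, qtr, add_zero, qtt] at h
    rw [cT, ctr, ← eq_of_add h, cc, ← hY, VQ', czU, hZ7]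
  have cSr : C.c S2 r = 0 := by rw [← hS2, Va2', csr, c0]
  have cUr : C.c U2 r = Z7 := by
    linear_combination (norm := skip) (1 : ZMod 2) • cTr + cSr
    rw [hSTU]
    simp only [C.nf]
    match_scalars <;> rfl
  have ct'z : C.c t' z = r := (cc _ _).trans czt'
  have zUs : C.t z U2 s = Z7 := by
    have h := C.Qaa2 z U2
    rw [hs, czU, hZ7] at h
    exact eq_of_add h
  have stz : C.t s t z = Z5 := by
    have h := C.Qaa2 z t
    rw [hs, czt, hZ5, C.t_comm] at h
    exact eq_of_add h
  have ssz : C.t s s z = 0 := by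
    have h := C.Qaa2 z s
    rw [hs, cc z s, csz, q0, C.t_comm, add_zero] at h
    exact h
  have t't'z : C.t t' t' z = C.t t t z := by
    rw [ht's]
    linear_combination (norm := skip) (1 : ZMod 2) • stz + ssz + (C.t_both zst).2
    simp only [C.nf]
    match_scalars <;> rfl
  have zUt' : C.t z U2 t' = C.t t t z + Z5 + Z7 := by
    have h := C.H31 t' z
    rw [hU2, t't'z, cc U2 z, czU, ct'z, cUr, Qt', qar, q0, q0, q0, add_zero] at h
    rw [C.t_comm, ← eq_of_add h]
  have zUt : C.t z U2 t = C.t t t z + Z5 := by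
    conv_lhs => rw [htst]
    linear_combination (norm := skip) (1 : ZMod 2) • zUs + zUt'
    simp only [C.nf]
    match_scalars <;> rfl
  have ctU : C.c t U2 = 0 := by
    have h1 : C.c t T2 = 0 := by rw [← hT2, VQ']; simp only [C.nf]
    have h2 : C.c S2 t = 0 := by rw [← hS2, Va2', cst, c0]
    linear_combination (norm := skip) (1 : ZMod 2) • h1 + h2
    rw [hSTU]
    simp only [C.nf]
    match_scalars <;> rfl
  -- With `w = 1 + z + t` and `v = 1 + z² + t'² + Q_z z` one has `Q_w v = 1`, so (QJ3) gives
  -- `Q_w Q_v Q_w = id`, which makes `Q_w` bijective.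
  have hinv : C.q (C.e + z + t) (C.e + s + U2 + r) = C.e := by
    have k1 := C.t_both zUt
    have k2 := C.t_both ztr
    have k3 := C.t_both zst
    have k4 := C.c_both csz
    have k5 := C.c_both cst
    have k6 := C.c_both czr
    have k7 := C.c_both czU
    have k8 := C.c_both ctU
    have k9 := C.c_both ctr
    have k10 := C.c_both czt
    linear_combination (norm := skip) (1 : ZMod 2) • (rfl : C.e = C.e)
    simp only [C.nf, k1, k2, k3, k4, k5, k6, k7, k8, k9, k10, hs, qzs, hY, hZ5, hT2, qts, qtU, qtr,
      hSTU]
    match_scalars <;> rfl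
  have hid : ∀ x, C.q (C.e + z + t) (C.q (C.e + s + U2 + r) (C.q (C.e + z + t) x)) = x :=
    fun x => by rw [← C.QJ3, hinv, C.q_one]
  have hb : Function.Bijective (C.q (C.e + z + t)) := by
    refine ⟨fun x y hxy => ?_, fun x => ⟨_, hid x⟩⟩
    rw [← hid x, ← hid y, hxy]
  have h := hU _ hb a
  linear_combination (norm := skip) (1 : ZMod 2) • h
  simp only [C.nf, C.c_both cza, C.c_both cat]
  match_scalars <;> rfl

/-- Nilpotency of `N_a` reduces `N = 0` to the vanishing of those `N_a b` with `N_a (N_a b) = 0`. -/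
theorem N_zero (hU : ∀ w, Function.Bijective (C.q w) → ∀ x, C.c w x = 0) (a b : J) :
    C.N a b = 0 := by
  have key : ∀ b, C.N a (C.N a b) = 0 → C.N a b = 0 := fun b h =>
    C.eq_zero_of_units hU (C.c_N a b) (C.q_N a b) h (C.N_N a b)
  exact key _ (key _ (C.N_cube a b))

/-- The identity `{a b x} + {b a x} + (a ∘ b) ∘ x = 0`. -/
def Cyclic : Prop := ∀ a b x : J, C.t a b x + C.t b a x + C.c (C.c a b) x = 0

theorem cyclic (hU : ∀ w, Function.Bijective (C.q w) → ∀ x, C.c w x = 0) : C.Cyclic := by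
  intro a b x
  have h1 := C.N_zero hU (a + b) x
  have h2 := C.N_zero hU a x
  have h3 := C.N_zero hU b x
  simp only [N] at h1 h2 h3
  linear_combination (norm := skip) (1 : ZMod 2) • h1 + h2 + h3
  simp only [C.nf]
  match_scalars <;> rfl

variable {C}

/-! ### Consequences of the cyclic identity -/

/-- The circle product with `a` is a derivation of `Q`. -/
theorem r1 (H : C.Cyclic) (a b x : J) :
    C.c a (C.q b x) + C.q b (C.c a x) + C.t b x (C.c a b) = 0 := by
  linear_combination (norm := skip) (1 : ZMod 2) • H b x a + H a x b + H a b (C.c b x) +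
    H b x (C.c a b) + C.qj2_2 C.e b a x + C.qj2_3 C.e a x b b
  simp only [C.nf]
  match_scalars <;> rfl

theorem r1p (H : C.Cyclic) (a b x d : J) :
    C.c a (C.t b x d) + C.t (C.c a b) x d + C.t b (C.c a x) d + C.t b x (C.c a d) = 0 := by
  linear_combination (norm := skip) (1 : ZMod 2) • C.r1 H a (b + d) x + C.r1 H a b x +
    C.r1 H a d x
  simp only [C.nf]
  match_scalars <;> rfl

theorem r2 (H : C.Cyclic) (a b x : J) :
    C.q (C.c a b) x + C.t b x (C.q a b) + C.q a (C.q b x) + C.q b (C.q a x) +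
    C.c a (C.q b (C.c a x)) = 0 := by
  linear_combination (norm := skip) (1 : ZMod 2) • C.r1 H a b x + C.r1 H (C.q a x) b a +
    H a b (C.q a x) + C.r1 H (C.q b a) a x + C.Jac a b (C.q a x) + C.onO x a (C.r1 H b a b) +
    C.onQ a (C.r1 H x b a) + C.r1p H b a x (C.q a b) + C.onO x a (C.r1 H a b a) +
    C.onO x a (H a b (C.c a b)) + C.qj2_1 a (C.c b x) b + C.onV b (C.qj2_1 a x b) +
    C.onV b (C.qj2_1 a b x) + C.qj2_2 C.e b a (C.q a x) + C.qj3_21 C.e a b x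
  simp only [C.nf]
  match_scalars <;> rfl

theorem r2a (H : C.Cyclic) (a d b x : J) :
    C.t (C.c a b) x (C.c d b) + C.t b x (C.t a b d) + C.t a (C.q b x) d + C.q b (C.t a x d) +
    C.c a (C.q b (C.c d x)) + C.c d (C.q b (C.c a x)) = 0 := by
  linear_combination (norm := skip) (1 : ZMod 2) • C.r2 H (a + d) b x + C.r2 H a b x +
    C.r2 H d b x
  simp only [C.nf]
  match_scalars <;> rfl

theorem r2b (H : C.Cyclic) (a b e x : J) :
    C.t (C.c a b) x (C.c a e) + C.t b x (C.q a e) + C.t e x (C.q a b) + C.q a (C.t b x e) +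
    C.t b (C.q a x) e + C.c a (C.t b (C.c a x) e) = 0 := by
  linear_combination (norm := skip) (1 : ZMod 2) • C.r2 H a (b + e) x + C.r2 H a b x +
    C.r2 H a e x
  simp only [C.nf]
  match_scalars <;> rfl

/-- (QJ2*) as a vanishing sum. -/
theorem F (H : C.Cyclic) (a d b x : J) :
    C.t d b (C.q a x) + C.t a b (C.t a x d) + C.q a (C.t b d x) + C.t a (C.t b a x) d = 0 := by
  linear_combination (norm := skip) (1 : ZMod 2) • H d b (C.q a x) + C.r2a H d x a b +
    C.r2a H b x a d + H d (C.q a b) x + C.r1 H x a (C.c b d) + C.Jac d x (C.q a b) +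
    C.r2b H a b x d + C.r2a H x (C.c b d) a C.e + C.onQ a (H d b x) + H d (C.t b a x) a +
    C.r2b H a x (C.c b d) C.e + C.onV d (C.r1 H x a b) + C.r2a H b (C.c d x) a C.e +
    C.r2b H a b (C.c d x) C.e + C.r1p H d a b (C.c a x) + C.onO b a (H a x d) +
    C.onV a (C.r1p H d b a x)
  simp only [C.nf]
  match_scalars <;> rfl

/-- The derivation property of `V_{u,v}` as a vanishing sum. -/
theorem Dst (H : C.Cyclic) (u v x y : J) :
    C.t u v (C.q x y) + C.q x (C.t v u y) + C.t x y (C.t u v x) = 0 := by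
  linear_combination (norm := skip) (1 : ZMod 2) • H v (C.q x y) u + C.r2a H u v x y +
    C.r1 H v x (C.c u y) + C.onO y x (H x v u) + C.onV u (C.r1 H v x y) +
    C.r1p H u x y (C.c x v) + C.onQ x (H u y v)
  simp only [C.nf]
  match_scalars <;> rfl

theorem qj2Star_of_cyclic (H : C.Cyclic) : C.QJ2Star := by
  intro a d b x
  linear_combination (norm := skip) (1 : ZMod 2) • C.F H a d b x
  match_scalars <;> rfl

theorem tripleDer_of_cyclic (H : C.Cyclic) : C.TripleDer := by
  intro u v x y
  linear_combination (norm := skip) (1 : ZMod 2) • C.Dst H u v x y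
  match_scalars <;> rfl

theorem star_of_cyclic (H : C.Cyclic) : C.Star := by
  intro x y z b
  linear_combination (norm := skip) (1 : ZMod 2) • H z (C.q y b) x + C.F H y x z b +
    H y (C.t z y b) x + dual (qj2Star_of_cyclic H) (tripleDer_of_cyclic H) y z b x +
    H b (C.q y z) x + C.onV x (C.r1 H z y b) + C.onV x (C.r1 H b y z) +
    C.onV x (C.r1p H y z y b) + C.onV x (H b y (C.c y z)) + C.onV x (H z y (C.c y b))
  simp only [C.nf]
  match_scalars <;> rfl

end CharTwo

end JordanOps

/-! ### Transfer to weak quadratic Jordan algebras -/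

namespace WeakQuadraticJordan

section Transfer

variable {k J : Type*} [Field k] [AddCommGroup J] [Module k J] (W : WeakQuadraticJordan k J)

/-- The additive operations of a weak quadratic Jordan algebra. -/
def toOps : JordanOps J where
  e := W.one
  q a x := W.Q a x
  t a x b := W.Qbil a b x
  q_add _ _ _ := map_add _ _ _
  add_q a b x := by simp [W.Qbil_apply]
  t_add _ _ _ _ := map_add _ _ _
  add_t _ _ _ _ := by simp
  t_comm a x b := by simp only [W.Qbil_apply, add_comm a b]; abel_nf
  t_self a x := by
    rw [W.Qbil_apply, ← two_smul k a, W.Q_smul]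
    simp only [LinearMap.sub_apply, LinearMap.smul_apply]
    module
  q_one x := by rw [W.QJ1]; rfl
  QJ2 := W.QJ2
  QJ3 a b x := by rw [W.QJ3]; rfl

theorem ops_smul :
    (∀ (s : k) a x, W.toOps.q a (s • x) = s • W.toOps.q a x) ∧
    (∀ (s : k) a x, W.toOps.q (s • a) x = s ^ 2 • W.toOps.q a x) ∧
    (∀ (s : k) a x b, W.toOps.t (s • a) x b = s • W.toOps.t a x b) ∧
    (∀ (s : k) a x b, W.toOps.t a (s • x) b = s • W.toOps.t a x b) ∧
    (∀ (s : k) a x b, W.toOps.t a x (s • b) = s • W.toOps.t a x b) := by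
  refine ⟨fun s a x => map_smul _ _ _, fun s a x => ?_, fun s a x b => ?_,
    fun s a x b => map_smul _ _ _, fun s a x b => ?_⟩ <;> simp [toOps, W.Q_smul]

/-- A scalar outside `{0, 1}` separates the two components of (QJ2) for `a + d` of degree one and
two in `d`. -/
theorem ops_qj2Star {r : k} (hr0 : r ≠ 0) (hr1 : r ≠ 1) : W.toOps.QJ2Star := by
  intro a d b x
  obtain ⟨f, hf⟩ : ∃ f, W.toOps.t d b (W.toOps.q a x) + W.toOps.t a b (W.toOps.t a x d) -
    (W.toOps.q a (W.toOps.t b d x) + W.toOps.t a (W.toOps.t b a x) d) = f := ⟨_, rfl⟩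
  obtain ⟨g, hg⟩ : ∃ g, W.toOps.t a b (W.toOps.q d x) + W.toOps.t d b (W.toOps.t a x d) -
    (W.toOps.q d (W.toOps.t b a x) + W.toOps.t a (W.toOps.t b d x) d) = g := ⟨_, rfl⟩
  have key : ∀ s : k, s • f + s ^ 2 • g = 0 := fun s => by
    rw [← hf, ← hg]
    linear_combination (norm := skip) W.toOps.QJ2 (a + s • d) b x - W.toOps.QJ2 a b x
      - s ^ 3 • W.toOps.QJ2 d b x
    simp only [W.toOps.nfz, W.ops_smul]
    module
  have h0 : (r ^ 2 - r) • f = 0 := by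
    linear_combination (norm := module) r ^ 2 • key 1 - key r
  rw [← sub_eq_zero, hf]
  refine (smul_eq_zero.1 h0).resolve_left ?_
  rw [sq, ← mul_sub_one]
  exact mul_ne_zero hr0 (sub_ne_zero.2 hr1)

/-- In characteristic two, a scalar `r` outside `{0, 1}` separates the components of (QJ3) of degree
one, two and three in `d`, by the Vandermonde system at `1`, `r` and `1 + r`. -/
theorem ops_qj3Star {r : k} (hk : (2 : k) = 0) (hr0 : r ≠ 0) (hr1 : r ≠ 1) :
    W.toOps.QJ3Star := by
  intro a d b x
  let q := W.toOps.q
  let t := W.toOps.t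
  obtain ⟨f, hf⟩ : ∃ f, t (q a b) x (t a b d) - (q a (q b (t a x d)) + t a (q b (q a x)) d) = f :=
    ⟨_, rfl⟩
  obtain ⟨g, hg⟩ : ∃ g, q (t a b d) x + t (q a b) x (q d b) - (q a (q b (q d x)) +
    t a (q b (t a x d)) d + q d (q b (q a x))) = g := ⟨_, rfl⟩
  obtain ⟨h, hh⟩ : ∃ h, t (q d b) x (t a b d) - (q d (q b (t a x d)) + t a (q b (q d x)) d) = h :=
    ⟨_, rfl⟩
  have key : ∀ s : k, s • f + s ^ 2 • g + s ^ 3 • h = 0 := fun s => by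
    rw [← hf, ← hg, ← hh]
    linear_combination (norm := skip) W.toOps.QJ3 (a + s • d) b x - W.toOps.QJ3 a b x
      - s ^ 4 • W.toOps.QJ3 d b x
    simp only [q, t, W.toOps.nfz, W.ops_smul]
    module
  have hr2 : 1 + r ≠ 0 := fun h => hr1 (by linear_combination h - hk)
  have k2 : f + r • g + r ^ 2 • h = 0 := (smul_eq_zero.1 (by
    linear_combination (norm := module) key r : r • (f + r • g + r ^ 2 • h) = 0)).resolve_left hr0
  have k3 : f + (1 + r) • g + (1 + r) ^ 2 • h = 0 := (smul_eq_zero.1 (by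
    linear_combination (norm := module) key (1 + r) :
      (1 + r) • (f + (1 + r) • g + (1 + r) ^ 2 • h) = 0)).resolve_left hr2
  have z : ∀ y : J, (2 : k) • y = 0 := fun y => by rw [hk, zero_smul]
  refine sub_eq_zero.1 (hf.trans ?_)
  linear_combination (norm := module) key 1 - k2 - k3 + z f + r • z g + (r ^ 2 + r) • z h

/-- In characteristic two, an element `w = δ(1)` satisfies `w ∘ x = 0` for all `x`: evaluating at
`Q_1 = id`, derivations give `Q_{1,δ₊(1)} = 0` and anti-derivations give
`Q_{1,δ₋(1)} = 2 δ₋ = 0`. -/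
theorem ops_cyclic_hyp (hk : (2 : k) = 0)
    (hgen : ∀ y : J, IsUnit (W.Q y) →
      ∃ δp δm : Module.End k J, W.IsEpsDerivation 1 δp ∧ W.IsEpsDerivation (-1) δm ∧
        (δp + δm) W.one = y) (w : J) (hw : Function.Bijective (W.toOps.q w)) (x : J) :
    W.toOps.c w x = 0 := by
  obtain ⟨δp, δm, hp, hm, h⟩ := hgen w ((Module.End.isUnit_iff _).2 hw)
  have hp' := hp x W.one
  have hm' := hm x W.one
  rw [W.QJ1] at hp' hm'
  have z : (2 : k) • δm x = 0 := by rw [hk, zero_smul]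
  rw [W.toOps.c_comm, ← W.toOps.left_one]
  change W.Qbil W.one w x = 0
  rw [← h, LinearMap.add_apply, map_add, LinearMap.add_apply]
  simp only [Module.End.one_apply] at hp' hm'
  linear_combination (norm := module) z - hp' - hm'

theorem ops_star
    (hgen : ∀ a y : J, IsUnit (W.Q a) → IsUnit (W.Q y) →
      ∃ δp δm : Module.End k J, W.IsEpsDerivation 1 δp ∧ W.IsEpsDerivation (-1) δm ∧
        (δp + δm) a = y) : W.toOps.QJ2Star ∧ W.toOps.QJ3Star := by
  by_cases hk : (2 : k) = 0
  · by_cases hr : ∃ r : k, r ≠ 0 ∧ r ≠ 1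
    · obtain ⟨r, hr0, hr1⟩ := hr
      exact ⟨W.ops_qj2Star hr0 hr1, W.ops_qj3Star hk hr0 hr1⟩
    · let _ : Module (ZMod 2) J := AddCommGroup.zmodModule fun x => by
        rw [← Nat.cast_smul_eq_nsmul k, Nat.cast_ofNat, hk, zero_smul]
      have H := W.toOps.cyclic (W.ops_cyclic_hyp hk
        fun y hy => hgen W.one y (by rw [W.QJ1]; exact isUnit_one) hy)
      have hF := JordanOps.qj2Star_of_cyclic H
      exact ⟨hF, JordanOps.qj3Star hF (JordanOps.tripleDer_of_cyclic H)
        (JordanOps.star_of_cyclic H)⟩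
  · have h2 : ∀ x : J, x + x = 0 → x = 0 := fun x hx => by
      rw [← two_smul k] at hx
      exact (smul_eq_zero.1 hx).resolve_left hk
    have hF := W.ops_qj2Star (r := -1) (neg_ne_zero.2 _root_.one_ne_zero)
      fun h => hk (by linear_combination -h)
    have hD := JordanOps.tripleDer_of_half h2 hF
    exact ⟨hF, JordanOps.qj3Star hF hD (JordanOps.star_of_half h2 hD)⟩

end Transfer

end WeakQuadraticJordan

/-- If for all invertible `a, y` there is a generalized derivation `δ = δ₊ + δ₋`
(with `δ₊` a derivation and `δ₋` an anti-derivation) such that `δ(a) = y`, then the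
linearized identities (QJ2*) and (QJ3*) hold, so `J` is a quadratic Jordan algebra. -/
theorem quadratic_of_generalized_derivations {k J : Type*} [Field k] [AddCommGroup J]
    [Module k J] (W : WeakQuadraticJordan k J)
    (hgen : ∀ a y : J, IsUnit (W.Q a) → IsUnit (W.Q y) →
      ∃ δp δm : Module.End k J, W.IsEpsDerivation 1 δp ∧ W.IsEpsDerivation (-1) δm ∧
        (δp + δm) a = y) :
    ∀ a₁ a₂ b : J,
      (W.V a₂ b * W.Q a₁ + W.V a₁ b * W.Qbil a₁ a₂
        = W.Qbil a₁ a₂ * W.V b a₁ + W.Q a₁ * W.V b a₂) ∧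
      (W.Qbil (W.Q a₁ b) (W.Qbil a₁ a₂ b)
        = W.Q a₁ * W.Q b * W.Qbil a₁ a₂ + W.Qbil a₁ a₂ * W.Q b * W.Q a₁) := by
  obtain ⟨hF, hG⟩ := W.ops_star hgen
  intro a₁ a₂ b
  refine ⟨LinearMap.ext fun x => ?_, LinearMap.ext fun x => hG a₁ a₂ b x⟩
  exact (hF a₁ a₂ b x).trans (add_comm _ _)
end

section
/- Let (J,Q,1) be a weak quadratic Jordan algebra over a field k. Then for all a, x, y ∈ J one has y·Q_{a·Q_x, x} = a·Q_{y·Q_x, x}. -/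
/-- `y·Q_{a·Q_x, x} = a·Q_{y·Q_x, x}` for all `a, x, y`. -/
theorem Qbil_symm_identity {k J : Type*} [Field k] [AddCommGroup J] [Module k J]
    (W : WeakQuadraticJordan k J) :
    ∀ a x y : J, W.Qbil (W.Q x a) x y = W.Qbil (W.Q x y) x a := by
  intro a x y
  have symm : ∀ u v : J, W.Qbil u v = W.Qbil v u := fun u v => by
    rw [W.Qbil_apply, W.Qbil_apply, add_comm u v, sub_right_comm]
  -- By (QJ2) the two sides are `x·Q_{y,a} Q_x` and `x·Q_{a,y} Q_x`.
  rw [symm _ x, symm _ x, W.QJ2, W.QJ2, symm y a]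
end

section
/- Let (J,Q,1) be a weak quadratic Jordan algebra over a field k and let a ∈ J be invertible. Then the a-isotope (J, Q^a, a), where x·Q^a_y := x·Q_a^{-1}·Q_y, is again a weak quadratic Jordan algebra: Q^a is a quadratic map from J to End_k(J), Q^a_a = id, Q^a_b V^a_{b,c} = V^a_{c,b} Q^a_b for all b,c ∈ J, and Q^a_{b·Q^a_c} = Q^a_c Q^a_b Q^a_c for all b,c ∈ J (where V^a is formed from Q^a in the same way V is formed from Q). -/
namespace WeakQuadraticJordan

variable {k J : Type*} [Field k] [AddCommGroup J] [Module k J]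

/-- The polarization of (QJ3) in its inner argument. -/
theorem Qbil_Q_Q_s18 (W : WeakQuadraticJordan k J) (p b c : J) :
    W.Qbil (W.Q p b) (W.Q p c) = W.Q p * W.Qbil b c * W.Q p := by
  rw [W.Qbil_apply, W.Qbil_apply, ← map_add, W.QJ3, W.QJ3, W.QJ3]
  noncomm_ring

/-- `Q_a⁻¹ = Q_{a⁻¹}`, where `a⁻¹ = a·Q_a⁻¹`. -/
theorem Q_inverse (W : WeakQuadraticJordan k J) {a : J} (ha : IsUnit (W.Q a)) :
    W.Q ((↑ha.unit⁻¹ : Module.End k J) a) = (↑ha.unit⁻¹ : Module.End k J) := by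
  have h : W.Q a ((↑ha.unit⁻¹ : Module.End k J) a) = a := by
    rw [← Module.End.mul_apply, ha.mul_val_inv, Module.End.one_apply]
  have h3 := W.QJ3 a ((↑ha.unit⁻¹ : Module.End k J) a)
  rw [h] at h3
  apply ha.mul_left_cancel
  apply ha.mul_right_cancel
  rw [← h3, ha.mul_val_inv, one_mul]

theorem ne_zero_of_isUnit_Q (W : WeakQuadraticJordan k J) {a : J} (ha : IsUnit (W.Q a)) :
    a ≠ 0 := by
  rintro rfl
  have h0 : W.Q 0 = 0 := by simpa using W.Q_smul 0 0
  rw [h0] at ha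
  -- If `0` is a unit of `End k J`, then `J` is trivial, against `1 ≠ 0`.
  have h1 : (0 : Module.End k J) = 1 := isUnit_zero_iff.mp ha
  exact W.one_ne_zero (by simpa using (LinearMap.congr_fun h1 W.one).symm)

/-- The isotope of `W` at an invertible element `a`. In Mathlib's order of composition, the
right-acting product `Q_a⁻¹ Q_y` reads `Q y * (Q a)⁻¹`. -/
noncomputable def isotope (W : WeakQuadraticJordan k J) (a : J) (ha : IsUnit (W.Q a)) :
    WeakQuadraticJordan k J where
  Q y := W.Q y * (↑ha.unit⁻¹ : Module.End k J)
  one := a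
  one_ne_zero := W.ne_zero_of_isUnit_Q ha
  Q_smul t b := by rw [W.Q_smul, smul_mul_assoc]
  Qbil := W.Qbil.compr₂ (LinearMap.mulRight k (↑ha.unit⁻¹ : Module.End k J))
  Qbil_apply b c := by
    simp only [LinearMap.compr₂_apply, LinearMap.mulRight_apply, W.Qbil_apply, sub_mul]
  QJ1 := ha.mul_val_inv
  QJ2 b c x := by
    rw [← W.Q_inverse ha]
    simp only [LinearMap.compr₂_apply, LinearMap.mulRight_apply, Module.End.mul_apply]
    rw [W.QJ2, W.Qbil_Q_Q_s18]
    rfl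
  QJ3 b c := by
    rw [← W.Q_inverse ha]
    simp only [Module.End.mul_apply, W.QJ3, mul_assoc]

end WeakQuadraticJordan

/-- The `a`-isotope `(J, Q^a, a)`, with `x·Q^a_y := x·Q_a⁻¹·Q_y`, of a weak quadratic
Jordan algebra is again a weak quadratic Jordan algebra: there is a weak quadratic
Jordan algebra structure on `J` whose unit is `a` and whose quadratic map is `Q^a`
(this packages: `Q^a` is quadratic, `Q^a_a = id`, and (QJ2), (QJ3) hold for `Q^a`,
with `V^a` formed from `Q^a` as `V` is from `Q`). -/
theorem isotope_is_weak_quadratic_jordan {k J : Type*} [Field k] [AddCommGroup J]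
    [Module k J] (W : WeakQuadraticJordan k J) (a : J) (ha : IsUnit (W.Q a)) :
    ∃ W' : WeakQuadraticJordan k J, W'.one = a ∧
      ∀ y : J, W'.Q y = W.Q y * (↑ha.unit⁻¹ : Module.End k J) := by
  exact ⟨W.isotope a ha, rfl, fun _ => rfl⟩
end
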